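/- The generating function C(x,y) of connected crossing-free chord diagrams (connected as graphs, x marking vertices and y marking chords) satisfies y·C³ + y·C² − x(1+2y)·C + x²(1+y) = 0. -/

import Mathlib

/-- Two chords `(p.1, p.2)` and `(q.1, q.2)` of a circle with vertices labeled
`0, 1, …, n-1` in circular order interleave, i.e. cross, when
`p.1 < q.1 < p.2 < q.2`. -/
def Interleaves {n : ℕ} (p q : Fin n × Fin n) : Prop :=
  p.1 < q.1 ∧ q.1 < p.2 ∧ p.2 < q.2

instance {n : ℕ} (p q : Fin n × Fin n) : Decidable (Interleaves p q) :=
  inferInstanceAs (Decidable (_ ∧ _ ∧ _))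

/-- The number of crossings of a set of chords (each chord recorded with its
endpoints in increasing order): the number of unordered pairs of chords whose
endpoints interleave around the circle. -/
def crossNum {n : ℕ} (D : Finset (Fin n × Fin n)) : ℕ :=
  ((D ×ˢ D).filter fun pq => Interleaves pq.1 pq.2).card

open MvPowerSeries

/-- A chord diagram on the `n` labeled points `0, …, n−1` of a circle is a set
of chords, each recorded with its endpoints in increasing order; isolated
vertices are allowed, chords may share endpoints, but there are no repeated
chords. `IsDiagram D` states that the chords are correctly normalized. -/
def IsDiagram {n : ℕ} (D : Finset (Fin n × Fin n)) : Prop :=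
  ∀ p ∈ D, p.1 < p.2

/-- The generating function `D₀(x,y)` of crossing-free chord diagrams on a
circle, where `x` (variable `0`) marks vertices and `y` (variable `1`) marks
chords. -/
noncomputable def diagGF0 : MvPowerSeries (Fin 2) ℚ :=
  fun e => (Nat.card {D : Finset (Fin (e 0) × Fin (e 0)) //
    IsDiagram D ∧ crossNum D = 0 ∧ D.card = e 1} : ℚ)

/-- The graph on the `n` points of the circle whose edges are the chords of the
diagram `D`. -/
def diagGraph {n : ℕ} (D : Finset (Fin n × Fin n)) : SimpleGraph (Fin n) :=
  SimpleGraph.fromRel (fun a b => (a, b) ∈ D)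

/-- The generating function `C(x,y)` of connected crossing-free chord diagrams
(connected as graphs; a single isolated vertex is connected), where `x`
(variable `0`) marks vertices and `y` (variable `1`) marks chords. -/
noncomputable def connDiagGF0 : MvPowerSeries (Fin 2) ℚ :=
  fun e => (Nat.card {D : Finset (Fin (e 0) × Fin (e 0)) //
    IsDiagram D ∧ crossNum D = 0 ∧ D.card = e 1 ∧ (diagGraph D).Connected} : ℚ)

/-!
Let `W` be the generating function of the connected diagrams containing the chord between the first
and the last point, with `x` marking all points but the first. Cutting a connected diagram on at
least two points at the farthest neighbour of its first point leaves a diagram counted by `W` and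
an arbitrary connected diagram, so `C = x + W * C`. Removing the chord between the first and the
last point from a diagram counted by `W` leaves either a connected diagram or, by planarity, two
connected diagrams on complementary intervals, so `(1 + y) * x * W = y * (C - x + C ^ 2)`; the
factor `1 + y` corrects for the connected diagrams that already contain that chord. Eliminating
`W` gives the equation.
-/

section CardGF

open Finset

variable {ι κ R : Type*} [CommSemiring R]

/-- The generating polynomial `∑ y ^ |D|` of a finite family of finite sets by cardinality. -/
def cardGF (𝒟 : Finset (Finset ι)) (y : R) : R :=
  ∑ D ∈ 𝒟, y ^ #D

theorem cardGF_eq_mul_of_filter {𝒟 𝒜 ℬ : Finset (Finset ι)} (P : ι → Prop)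
    [DecidablePred P] (h𝒟 : ∀ D, D ∈ 𝒟 ↔ D.filter P ∈ 𝒜 ∧ (D.filter fun p => ¬ P p) ∈ ℬ)
    (h𝒜 : ∀ A ∈ 𝒜, ∀ p ∈ A, P p) (hℬ : ∀ B ∈ ℬ, ∀ p ∈ B, ¬ P p) (y : R) :
    cardGF 𝒟 y = cardGF 𝒜 y * cardGF ℬ y := by
  classical
  have filter_union_of_mem {A B} (hA : A ∈ 𝒜) (hB : B ∈ ℬ) :
      (A ∪ B).filter P = A ∧ ((A ∪ B).filter fun p => ¬ P p) = B := by
    simp only [filter_union]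
    rw [filter_true_of_mem (h𝒜 A hA), filter_false_of_mem (hℬ B hB),
      filter_false_of_mem fun p hp => not_not.2 (h𝒜 A hA p hp), filter_true_of_mem (hℬ B hB)]
    simp
  simp only [cardGF]
  rw [sum_mul_sum, ← sum_product']
  refine sum_nbij' (fun D => (D.filter P, D.filter fun p => ¬ P p)) (fun x => x.1 ∪ x.2)
    (fun D hD => mem_product.2 ((h𝒟 D).1 hD)) (fun x hx => ?_)
    (fun D _ => filter_union_filter_not_eq P D) (fun x hx => ?_) (fun D _ => ?_)
  · rw [mem_product] at hx
    obtain ⟨hA, hB⟩ := filter_union_of_mem hx.1 hx.2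
    rw [h𝒟, hA, hB]
    exact hx
  · rw [mem_product] at hx
    exact Prod.ext_iff.2 (filter_union_of_mem hx.1 hx.2)
  · rw [← pow_add, card_filter_add_card_filter_not]

theorem cardGF_eq_sum_of_existsUnique {𝒟 : Finset (Finset ι)} {s : Finset κ}
    (Q : κ → Finset ι → Prop) [∀ k, DecidablePred (Q k)]
    (h : ∀ D ∈ 𝒟, ∃! k, k ∈ s ∧ Q k D) (y : R) :
    cardGF 𝒟 y = ∑ k ∈ s, cardGF (𝒟.filter (Q k)) y := by
  simp only [cardGF, sum_filter]
  rw [sum_comm]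
  refine sum_congr rfl fun D hD => ?_
  obtain ⟨k, ⟨hk, hQ⟩, huniq⟩ := h D hD
  rw [sum_eq_single_of_mem k hk fun i hi hik => if_neg fun hQi => hik (huniq i ⟨hi, hQi⟩),
    if_pos hQ]

end CardGF

section Linked

variable {α β : Type*}

/-- Two points are linked by `D` when a path of chords of `D`, each traversed in either direction,
joins them. -/
def Linked (D : Finset (α × α)) : α → α → Prop :=
  Relation.EqvGen fun u v => (u, v) ∈ D

namespace Linked

variable {D : Finset (α × α)} {u v w : α}

@[simp, refl]
protected theorem refl (D : Finset (α × α)) (u : α) : Linked D u u :=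
  Relation.EqvGen.refl u

@[symm]
protected theorem symm (h : Linked D u v) : Linked D v u :=
  Relation.EqvGen.symm _ _ h

protected theorem trans (huv : Linked D u v) (hvw : Linked D v w) : Linked D u w :=
  Relation.EqvGen.trans _ _ _ huv hvw

theorem of_mem {p : α × α} (hp : p ∈ D) : Linked D p.1 p.2 :=
  Relation.EqvGen.rel _ _ hp

theorem map {E : Finset (β × β)} {f : α → β} (hf : ∀ p ∈ D, Linked E (f p.1) (f p.2))
    (h : Linked D u v) : Linked E (f u) (f v) := by
  induction h with
  | rel u v huv => exact hf (u, v) huv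
  | refl u => exact .refl E (f u)
  | symm u v _ ih => exact ih.symm
  | trans u v w _ _ ihuv ihvw => exact ihuv.trans ihvw

theorem mono {E : Finset (α × α)} (hDE : D ⊆ E) (h : Linked D u v) : Linked E u v :=
  h.map (f := id) fun _ hp => of_mem (hDE hp)

theorem iff_of_forall_mem {P : α → Prop} (hP : ∀ p ∈ D, P p.1 ↔ P p.2) (h : Linked D u v) :
    P u ↔ P v := by
  induction h with
  | rel u v huv => exact hP (u, v) huv
  | refl u => exact Iff.rfl
  | symm u v _ ih => exact ih.symm
  | trans u v w _ _ ihuv ihvw => exact ihuv.trans ihvw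

end Linked

end Linked

section Noncrossing

variable {α : Type*} [LinearOrder α]

/-- A crossing-free set of chords on linearly ordered points, each chord being recorded with its
endpoints in increasing order. -/
structure IsNoncrossing (D : Finset (α × α)) : Prop where
  fst_lt_snd : ∀ p ∈ D, p.1 < p.2
  not_cross : ∀ p ∈ D, ∀ q ∈ D, ¬ (p.1 < q.1 ∧ q.1 < p.2 ∧ p.2 < q.2)

namespace IsNoncrossing

variable {D E : Finset (α × α)}

theorem mono (hD : IsNoncrossing D) (hED : E ⊆ D) : IsNoncrossing E where
  fst_lt_snd p hp := hD.fst_lt_snd p (hED hp)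
  not_cross p hp q hq := hD.not_cross p (hED hp) q (hED hq)

protected theorem union (hD : IsNoncrossing D) (hE : IsNoncrossing E)
    (h : ∀ p ∈ D, ∀ q ∈ E, p.2 ≤ q.1) : IsNoncrossing (D ∪ E) where
  fst_lt_snd := by
    have := hD.fst_lt_snd
    have := hE.fst_lt_snd
    grind
  not_cross := by
    have := hD.not_cross
    have := hD.fst_lt_snd
    have := hE.not_cross
    have := hE.fst_lt_snd
    grind

protected theorem insert {a b : α} (hD : IsNoncrossing D) (hab : a < b)
    (h : ∀ p ∈ D, a ≤ p.1 ∧ p.2 ≤ b) : IsNoncrossing (insert (a, b) D) where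
  fst_lt_snd := by
    have := hD.fst_lt_snd
    grind
  not_cross := by
    have := hD.not_cross
    grind

/-- The discrete Jordan curve theorem, for the region cut off by a chord. -/
theorem linked_fst_of_mem_Ioo {p : α × α} {u v : α} (hD : IsNoncrossing D) (hp : p ∈ D)
    (hu : u ∈ Set.Ioo p.1 p.2) (hv : v ∉ Set.Ioo p.1 p.2) (huv : Linked D u v) :
    Linked D u p.1 := by
  by_contra hup
  have ne_endpoint : ∀ w, Linked D u w → w ≠ p.1 ∧ w ≠ p.2 := by
    refine fun w hw => ⟨fun h => hup (h ▸ hw), fun h => hup ?_⟩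
    exact (h ▸ hw).trans (Linked.of_mem hp).symm
  have closed : ∀ q ∈ D, (Linked D u q.1 ∧ q.1 ∈ Set.Ioo p.1 p.2) ↔
      (Linked D u q.2 ∧ q.2 ∈ Set.Ioo p.1 p.2) := by
    intro q hq
    have linked_iff : Linked D u q.1 ↔ Linked D u q.2 :=
      ⟨fun h => h.trans (.of_mem hq), fun h => h.trans (Linked.of_mem hq).symm⟩
    rw [← linked_iff, and_congr_right_iff]
    intro hq₁
    have := ne_endpoint q.1 hq₁
    have := ne_endpoint q.2 (linked_iff.1 hq₁)
    have := hD.fst_lt_snd q hq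
    have := hD.not_cross p hp q hq
    have := hD.not_cross q hq p hp
    grind
  have hv' := (huv.iff_of_forall_mem (P := fun w => Linked D u w ∧ w ∈ Set.Ioo p.1 p.2) closed).1
    ⟨.refl D u, hu⟩
  exact hv hv'.2

end IsNoncrossing

end Noncrossing

section Connected

variable {α : Type*} [LinearOrder α]

/-- A crossing-free set of chords on the points of the interval `[a, b]` that connects all these
points; for `a ≤ b`, this is expressed by linking every point to `a`. -/
structure IsConnDiag (a b : α) (D : Finset (α × α)) : Prop extends IsNoncrossing D where
  mem_Icc : ∀ p ∈ D, a ≤ p.1 ∧ p.2 ≤ b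
  linked_left : ∀ u ∈ Set.Icc a b, Linked D a u

/-- No chord of `D` passes strictly over the point `v`. -/
def IsCutPoint (D : Finset (α × α)) (v : α) : Prop :=
  ∀ p ∈ D, p.1 < v → p.2 ≤ v

/-- No chord of `D` passes over the gap between `c` and the next point. -/
def IsGap (D : Finset (α × α)) (c : α) : Prop :=
  ∀ p ∈ D, p.1 ≤ c → p.2 ≤ c

namespace IsConnDiag

variable {D E : Finset (α × α)} {a b c d u v : α}

theorem linked (hD : IsConnDiag a b D) (hu : u ∈ Set.Icc a b) (hv : v ∈ Set.Icc a b) :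
    Linked D u v :=
  (hD.linked_left u hu).symm.trans (hD.linked_left v hv)

theorem not_isGap (hD : IsConnDiag a b D) (hac : a ≤ c) (hcb : c < b) : ¬ IsGap D c := by
  intro hc
  have hab : Linked D a b := hD.linked_left b ⟨hac.trans hcb.le, le_rfl⟩
  have le_iff : ∀ p ∈ D, p.1 ≤ c ↔ p.2 ≤ c := fun p hp =>
    ⟨hc p hp, (hD.fst_lt_snd p hp).le.trans⟩
  exact hcb.not_ge ((hab.iff_of_forall_mem (P := (· ≤ c)) le_iff).1 hac)

theorem of_retraction (hD : IsConnDiag a b D) (hED : E ⊆ D) (hE : ∀ p ∈ E, c ≤ p.1 ∧ p.2 ≤ d)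
    (hsub : Set.Icc c d ⊆ Set.Icc a b) {f : α → α} (hfix : ∀ u ∈ Set.Icc c d, f u = u)
    (hf : ∀ p ∈ D, Linked E (f p.1) (f p.2)) : IsConnDiag c d E where
  toIsNoncrossing := hD.mono hED
  mem_Icc := hE
  linked_left u hu := by
    have hc : c ∈ Set.Icc c d := ⟨le_rfl, hu.1.trans hu.2⟩
    simpa only [hfix u hu, hfix c hc] using (hD.linked (hsub hc) (hsub hu)).map hf

theorem filter_le_of_isCutPoint (hD : IsConnDiag a b D) (hvb : v ≤ b) (hv : IsCutPoint D v) :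
    IsConnDiag a v (D.filter fun p => p.2 ≤ v) := by
  refine hD.of_retraction (f := (min · v)) (Finset.filter_subset _ _) (fun p hp => ?_)
    (Set.Icc_subset_Icc_right hvb) (fun u hu => min_eq_left hu.2) (fun p hp => ?_)
  · rw [Finset.mem_filter] at hp
    exact ⟨(hD.mem_Icc p hp.1).1, hp.2⟩
  · by_cases hpv : p.2 ≤ v
    · rw [min_eq_left hpv, min_eq_left ((hD.fst_lt_snd p hp).le.trans hpv)]
      exact .of_mem (Finset.mem_filter.2 ⟨hp, hpv⟩)
    · rw [min_eq_right (not_lt.1 fun h => hpv (hv p hp h)), min_eq_right (not_le.1 hpv).le]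

theorem filter_not_le_of_isCutPoint (hD : IsConnDiag a b D) (hav : a ≤ v)
    (hv : IsCutPoint D v) : IsConnDiag v b (D.filter fun p => ¬ p.2 ≤ v) := by
  have le_fst : ∀ p ∈ D, ¬ p.2 ≤ v → v ≤ p.1 := fun p hp hpv => not_lt.1 fun h => hpv (hv p hp h)
  refine hD.of_retraction (f := (max · v)) (Finset.filter_subset _ _) (fun p hp => ?_)
    (Set.Icc_subset_Icc_left hav) (fun u hu => max_eq_left hu.1) (fun p hp => ?_)
  · rw [Finset.mem_filter] at hp
    exact ⟨le_fst p hp.1 hp.2, (hD.mem_Icc p hp.1).2⟩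
  · by_cases hpv : p.2 ≤ v
    · rw [max_eq_right hpv, max_eq_right ((hD.fst_lt_snd p hp).le.trans hpv)]
    · rw [max_eq_left (le_fst p hp hpv), max_eq_left (not_le.1 hpv).le]
      exact .of_mem (Finset.mem_filter.2 ⟨hp, hpv⟩)

protected theorem union (hD : IsConnDiag a v D) (hE : IsConnDiag v b E) (hav : a ≤ v)
    (hvb : v ≤ b) : IsConnDiag a b (D ∪ E) where
  toIsNoncrossing := hD.toIsNoncrossing.union hE.toIsNoncrossing fun p hp q hq =>
    (hD.mem_Icc p hp).2.trans (hE.mem_Icc q hq).1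
  mem_Icc := by
    have := hD.mem_Icc
    have := hE.mem_Icc
    grind
  linked_left u hu := by
    rcases le_total u v with huv | hvu
    · exact (hD.linked_left u ⟨hu.1, huv⟩).mono Finset.subset_union_left
    · exact ((hD.linked_left v ⟨hav, le_rfl⟩).mono Finset.subset_union_left).trans
        ((hE.linked_left u ⟨hvu, hu.2⟩).mono Finset.subset_union_right)

theorem isCutPoint_union (hD : IsConnDiag a v D) (hE : IsConnDiag v b E) :
    IsCutPoint (D ∪ E) v := by
  have := hD.mem_Icc
  have := hE.mem_Icc
  grind [IsCutPoint]

theorem filter_le_of_isGap (hD : IsConnDiag a b (insert (a, b) D)) (hcb : c < b)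
    (hc : IsGap D c) : IsConnDiag a c (D.filter fun p => p.2 ≤ c) := by
  refine hD.of_retraction (f := fun u => if u ≤ c then u else a)
    ((Finset.filter_subset _ _).trans (Finset.subset_insert _ _)) (fun p hp => ?_)
    (Set.Icc_subset_Icc_right hcb.le) (fun u hu => if_pos hu.2) (fun p hp => ?_)
  · rw [Finset.mem_filter] at hp
    exact ⟨(hD.mem_Icc p (Finset.mem_insert_of_mem hp.1)).1, hp.2⟩
  · have hlt := hD.fst_lt_snd p hp
    rcases Finset.mem_insert.1 hp with rfl | hp
    · simp [hcb.not_ge]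
    · by_cases hpc : p.2 ≤ c
      · rw [if_pos hpc, if_pos (hlt.le.trans hpc)]
        exact .of_mem (Finset.mem_filter.2 ⟨hp, hpc⟩)
      · rw [if_neg hpc, if_neg fun h => hpc (hc p hp h)]

theorem filter_not_le_of_isGap (hD : IsConnDiag a b (insert (a, b) D)) (hac : a ≤ c)
    (hcd : c ⋖ d) (hc : IsGap D c) :
    IsConnDiag d b (D.filter fun p => ¬ p.2 ≤ c) := by
  refine hD.of_retraction (f := fun u => if u ≤ c then b else u)
    ((Finset.filter_subset _ _).trans (Finset.subset_insert _ _)) (fun p hp => ?_)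
    (Set.Icc_subset_Icc_left (hac.trans hcd.le)) (fun u hu => if_neg (hcd.lt.trans_le hu.1).not_ge)
    (fun p hp => ?_)
  · rw [Finset.mem_filter] at hp
    exact ⟨hcd.ge_of_gt (not_le.1 fun h => hp.2 (hc p hp.1 h)),
      (hD.mem_Icc p (Finset.mem_insert_of_mem hp.1)).2⟩
  · have hlt := hD.fst_lt_snd p hp
    rcases Finset.mem_insert.1 hp with rfl | hp
    · simp [hac]
    · by_cases hpc : p.2 ≤ c
      · rw [if_pos hpc, if_pos (hlt.le.trans hpc)]
      · rw [if_neg hpc, if_neg fun h => hpc (hc p hp h)]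
        exact .of_mem (Finset.mem_filter.2 ⟨hp, hpc⟩)

protected theorem insert (hD : IsConnDiag a b D) (hab : a < b) :
    IsConnDiag a b (insert (a, b) D) where
  toIsNoncrossing := hD.toIsNoncrossing.insert hab hD.mem_Icc
  mem_Icc := by
    have := hD.mem_Icc
    grind
  linked_left u hu := (hD.linked_left u hu).mono (Finset.subset_insert _ _)

theorem insert_union (hD : IsConnDiag a c D) (hE : IsConnDiag d b E) (hac : a ≤ c) (hcd : c ⋖ d)
    (hdb : d ≤ b) : IsConnDiag a b (insert (a, b) (D ∪ E)) := by
  have hmem : ∀ p ∈ D ∪ E, a ≤ p.1 ∧ p.2 ≤ b := by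
    have := hD.mem_Icc
    have := hE.mem_Icc
    have := hcd.lt
    grind
  refine ⟨IsNoncrossing.insert ?_ ((hac.trans_lt hcd.lt).trans_le hdb) hmem, ?_, fun u hu => ?_⟩
  · exact hD.toIsNoncrossing.union hE.toIsNoncrossing fun p hp q hq =>
      ((hD.mem_Icc p hp).2.trans hcd.le).trans (hE.mem_Icc q hq).1
  · simpa using hmem
  · rcases le_or_gt u c with huc | hcu
    · exact (hD.linked_left u ⟨hu.1, huc⟩).mono (by grind)
    · exact (Linked.of_mem (Finset.mem_insert_self (a, b) _)).trans <|
        (hE.linked ⟨hdb, le_rfl⟩ ⟨hcd.ge_of_gt hcu, hu.2⟩).mono (by grind)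

theorem isGap_union (hD : IsConnDiag a c D) (hE : IsConnDiag d b E) (hcd : c ⋖ d) :
    IsGap (D ∪ E) c := by
  have := hD.mem_Icc
  have := hE.mem_Icc
  have := hcd.lt
  grind [IsGap]

theorem existsUnique_isCutPoint (hD : IsConnDiag a b D) (hab : a < b) :
    ∃! v, (a < v ∧ v ≤ b) ∧ (a, v) ∈ D ∧ IsCutPoint D v := by
  have neighbors_nonempty : (D.filter fun p => p.1 = a).Nonempty := by
    by_contra! h
    refine hD.not_isGap le_rfl hab fun p hp hpa => absurd (hpa.antisymm (hD.mem_Icc p hp).1) ?_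
    exact Finset.filter_eq_empty_iff.1 h hp
  obtain ⟨⟨a', v⟩, hmem, hmax⟩ := Finset.exists_max_image _ Prod.snd neighbors_nonempty
  obtain ⟨hav, rfl : a' = a⟩ := Finset.mem_filter.1 hmem
  have hcut : IsCutPoint D v := by
    intro p hp hpv
    have := hD.mem_Icc p hp
    have := hD.not_cross _ hav p hp
    have := hmax p
    grind
  refine ⟨v, ⟨⟨hD.fst_lt_snd _ hav, (hD.mem_Icc _ hav).2⟩, hav, hcut⟩, ?_⟩
  rintro w ⟨⟨haw, -⟩, haw_mem, hcut'⟩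
  exact (hcut _ haw_mem (hD.fst_lt_snd _ hav)).antisymm (hcut' _ hav haw)

theorem not_linked_of_insert (hD : IsConnDiag a b (insert (a, b) D)) (hD' : ¬ IsConnDiag a b D) :
    ¬ Linked D a b := by
  have hsub : D ⊆ insert (a, b) D := Finset.subset_insert _ _
  refine fun hab => hD' ⟨hD.mono hsub, fun p hp => hD.mem_Icc p (hsub hp), fun u hu => ?_⟩
  refine (hD.linked_left u hu).map (f := id) fun p hp => ?_
  rcases Finset.mem_insert.1 hp with rfl | hp
  exacts [hab, .of_mem hp]

/-- The gap lies just after the last point `c` linked to `a`: a chord passing over it would be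
separated from `a` and `c` although `c` lies below it, against the Jordan property. -/
theorem exists_isGap [LocallyFiniteOrder α] (hD : IsConnDiag a b (insert (a, b) D))
    (hD' : ¬ IsConnDiag a b D) : ∃ c, (a ≤ c ∧ c < b) ∧ IsGap D c := by
  classical
  have hsub : D ⊆ insert (a, b) D := Finset.subset_insert _ _
  have hab : a < b := hD.fst_lt_snd (a, b) (Finset.mem_insert_self _ _)
  obtain ⟨c, hc, hmax⟩ := Finset.exists_max_image ((Finset.Icc a b).filter (Linked D a ·)) id
    ⟨a, by simp [hab.le]⟩
  simp only [Finset.mem_filter, Finset.mem_Icc, id] at hc hmax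
  obtain ⟨⟨hac, hcb⟩, linked_c⟩ := hc
  have hcb' : c < b := hcb.lt_of_ne fun h => hD.not_linked_of_insert hD' (h ▸ linked_c)
  refine ⟨c, ⟨hac, hcb'⟩, fun p hp hpc => ?_⟩
  by_contra! hcp
  obtain ⟨hap, hpb⟩ := hD.mem_Icc p (hsub hp)
  have not_linked_fst : ¬ Linked D a p.1 := fun h =>
    hcp.not_ge (hmax p.2 ⟨⟨hac.trans hcp.le, hpb⟩, h.trans (.of_mem hp)⟩)
  have hc_mem : c ∈ Set.Ioo p.1 p.2 := ⟨hpc.lt_of_ne fun h => not_linked_fst (h ▸ linked_c), hcp⟩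
  have linked_fst : Linked D c p.1 := (hD.mono hsub).linked_fst_of_mem_Ioo hp hc_mem
    (fun ha => hap.not_gt ha.1) linked_c.symm
  exact not_linked_fst (linked_c.trans linked_fst)

theorem le_of_isGap (hD : IsConnDiag a b (insert (a, b) D)) (hcb : c < b) (hc : IsGap D c)
    (had : a ≤ d) (hd : IsGap D d) : c ≤ d := by
  by_contra! hdc
  exact (hD.filter_le_of_isGap hcb hc).not_isGap had hdc fun p hp =>
    hd p (Finset.mem_of_mem_filter p hp)

theorem existsUnique_isGap [LocallyFiniteOrder α] (hD : IsConnDiag a b (insert (a, b) D))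
    (hD' : ¬ IsConnDiag a b D) : ∃! c, (a ≤ c ∧ c < b) ∧ IsGap D c := by
  obtain ⟨c, ⟨hac, hcb⟩, hc⟩ := hD.exists_isGap hD'
  refine ⟨c, ⟨⟨hac, hcb⟩, hc⟩, ?_⟩
  rintro d ⟨⟨had, hdb⟩, hd⟩
  exact (hD.le_of_isGap hdb hd hac hc).antisymm (hD.le_of_isGap hcb hc had hd)

end IsConnDiag

end Connected

section Recurrences

open Finset

variable {α R : Type*} [LinearOrder α] [LocallyFiniteOrder α] [CommSemiring R]

open scoped Classical in
/-- The family of all connected crossing-free chord diagrams on the interval `[a, b]`. -/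
noncomputable def connDiags (a b : α) : Finset (Finset (α × α)) :=
  (Icc a b ×ˢ Icc a b).powerset.filter (IsConnDiag a b)

/-- The connected crossing-free chord diagrams on `[a, b]` that are closed by the chord `(a, b)`. -/
noncomputable def closedDiags (a b : α) : Finset (Finset (α × α)) :=
  (connDiags a b).filter ((a, b) ∈ ·)

/-- The chord diagrams without the chord `(a, b)` that become connected when it is added. -/
noncomputable def closableDiags (a b : α) : Finset (Finset (α × α)) :=
  (closedDiags a b).image (erase · (a, b))

variable {a b c v : α} {D : Finset (α × α)}

theorem mem_connDiags : D ∈ connDiags a b ↔ IsConnDiag a b D := by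
  simp only [connDiags, mem_filter, mem_powerset, and_iff_right_iff_imp]
  intro hD p hp
  have := hD.mem_Icc p hp
  have := hD.fst_lt_snd p hp
  grind

theorem mem_closedDiags : D ∈ closedDiags a b ↔ IsConnDiag a b D ∧ (a, b) ∈ D := by
  rw [closedDiags, mem_filter, mem_connDiags]

theorem mem_closableDiags :
    D ∈ closableDiags a b ↔ IsConnDiag a b (insert (a, b) D) ∧ (a, b) ∉ D := by
  simp only [closableDiags, mem_image, mem_closedDiags]
  constructor
  · rintro ⟨E, ⟨hE, hab⟩, rfl⟩
    rw [insert_erase hab]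
    exact ⟨hE, notMem_erase _ _⟩
  · rintro ⟨hD, hab⟩
    exact ⟨insert (a, b) D, ⟨hD, mem_insert_self _ _⟩, erase_insert hab⟩

theorem closedDiags_self (a : α) : closedDiags a a = ∅ :=
  eq_empty_of_forall_notMem fun _ hmem =>
    have ⟨hD, ha⟩ := mem_closedDiags.1 hmem
    (hD.fst_lt_snd _ ha).false

theorem connDiags_self (a : α) : connDiags a a = {∅} := by
  ext D
  rw [mem_connDiags, mem_singleton]
  constructor
  · refine fun hD => eq_empty_of_forall_notMem fun p hp => ?_
    have := hD.mem_Icc p hp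
    exact (hD.fst_lt_snd p hp).not_ge (this.2.trans this.1)
  · rintro rfl
    refine ⟨⟨by simp, by simp⟩, by simp, fun u hu => ?_⟩
    rw [hu.2.antisymm hu.1]

open scoped Classical in
theorem cardGF_connDiags_filter_isCutPoint (hav : a ≤ v) (hvb : v ≤ b) (y : R) :
    cardGF ((connDiags a b).filter fun D => (a, v) ∈ D ∧ IsCutPoint D v) y =
      cardGF (closedDiags a v) y * cardGF (connDiags v b) y := by
  refine cardGF_eq_mul_of_filter (fun p => p.2 ≤ v) (fun D => ?_) (fun A hA p hp => ?_)
    (fun B hB p hp => ?_) y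
  · simp only [mem_filter, mem_closedDiags, mem_connDiags, le_refl, and_true]
    refine ⟨fun ⟨hD, hmem, hv⟩ => ⟨⟨hD.filter_le_of_isCutPoint hvb hv, hmem⟩,
      hD.filter_not_le_of_isCutPoint hav hv⟩, fun ⟨⟨hA, hmem⟩, hB⟩ => ?_⟩
    rw [← filter_union_filter_not_eq (fun p : α × α => p.2 ≤ v) D]
    exact ⟨hA.union hB hav hvb, by simp [hmem], hA.isCutPoint_union hB⟩
  · exact ((mem_closedDiags.1 hA).1.mem_Icc p hp).2
  · have hB := mem_connDiags.1 hB
    exact ((hB.mem_Icc p hp).1.trans_lt (hB.fst_lt_snd p hp)).not_ge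

/-- Cut a connected diagram at the farthest neighbour of its first point. -/
theorem cardGF_connDiags (hab : a < b) (y : R) :
    cardGF (connDiags a b) y =
      ∑ v ∈ Ioc a b, cardGF (closedDiags a v) y * cardGF (connDiags v b) y := by
  classical
  rw [cardGF_eq_sum_of_existsUnique (s := Ioc a b) (fun v D => (a, v) ∈ D ∧ IsCutPoint D v)]
  · refine sum_congr rfl fun v hv => ?_
    rw [mem_Ioc] at hv
    exact cardGF_connDiags_filter_isCutPoint hv.1.le hv.2 y
  · intro D hD
    simpa only [mem_Ioc] using (mem_connDiags.1 hD).existsUnique_isCutPoint hab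

theorem cardGF_closedDiags (a b : α) (y : R) :
    cardGF (closedDiags a b) y = y * cardGF (closableDiags a b) y := by
  have erase_injOn : Set.InjOn (erase · (a, b)) (closedDiags a b : Set (Finset (α × α))) :=
    (erase_injOn' (a, b)).mono fun D hD => (mem_closedDiags.1 hD).2
  rw [cardGF, cardGF, closableDiags, sum_image erase_injOn, mul_sum]
  refine sum_congr rfl fun D hD => ?_
  rw [← pow_succ', card_erase_add_one (mem_closedDiags.1 hD).2]

theorem closableDiags_filter_mem_connDiags (hab : a < b) :
    (closableDiags a b).filter (· ∈ connDiags a b) = (connDiags a b).filter ((a, b) ∉ ·) := by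
  ext D
  simp only [mem_filter, mem_closableDiags, mem_connDiags]
  exact ⟨fun ⟨⟨_, hmem⟩, hD⟩ => ⟨hD, hmem⟩, fun ⟨hD, hmem⟩ => ⟨⟨hD.insert hab, hmem⟩, hD⟩⟩

open scoped Classical in
theorem cardGF_closableDiags_filter_isGap {d : α} (hac : a ≤ c) (hcd : c ⋖ d) (hdb : d ≤ b)
    (y : R) :
    cardGF (((closableDiags a b).filter (· ∉ connDiags a b)).filter (IsGap · c)) y =
      cardGF (connDiags a c) y * cardGF (connDiags d b) y := by
  have hcb : c < b := hcd.lt.trans_le hdb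
  refine cardGF_eq_mul_of_filter (fun p => p.2 ≤ c) (fun D => ?_) (fun A hA p hp => ?_)
    (fun B hB p hp => ?_) y
  · simp only [mem_filter, mem_closableDiags, mem_connDiags]
    refine ⟨fun ⟨⟨⟨hD, _⟩, _⟩, hc⟩ => ⟨hD.filter_le_of_isGap hcb hc,
      hD.filter_not_le_of_isGap hac hcd hc⟩, fun ⟨hA, hB⟩ => ?_⟩
    have hgap := hA.isGap_union hB hcd
    have hD := hA.insert_union hB hac hcd hdb
    rw [filter_union_filter_not_eq] at hgap hD
    exact ⟨⟨⟨hD, fun hmem => hcb.not_ge (hgap _ hmem hac)⟩,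
      fun hD' => hD'.not_isGap hac hcb hgap⟩, hgap⟩
  · exact ((mem_connDiags.1 hA).mem_Icc p hp).2
  · have hB := mem_connDiags.1 hB
    exact (hcd.lt.trans_le (hB.mem_Icc p hp).1).trans (hB.fst_lt_snd p hp) |>.not_ge

theorem cardGF_closableDiags_filter_notMem_connDiags [SuccOrder α] (a b : α) (y : R) :
    cardGF ((closableDiags a b).filter (· ∉ connDiags a b)) y =
      ∑ c ∈ Ico a b, cardGF (connDiags a c) y * cardGF (connDiags (Order.succ c) b) y := by
  classical
  rw [cardGF_eq_sum_of_existsUnique (s := Ico a b) (fun c D => IsGap D c)]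
  · refine sum_congr rfl fun c hc => ?_
    rw [mem_Ico] at hc
    exact cardGF_closableDiags_filter_isGap hc.1
      (Order.covBy_succ_of_not_isMax hc.2.not_isMax) (Order.succ_le_of_lt hc.2) y
  · intro D hD
    rw [mem_filter, mem_closableDiags, mem_connDiags] at hD
    simpa only [mem_Ico] using hD.1.1.existsUnique_isGap hD.2

/-- Remove the closing chord: the rest is either connected or splits at its unique gap. -/
theorem one_add_mul_cardGF_closedDiags [SuccOrder α] (hab : a < b) (y : R) :
    (1 + y) * cardGF (closedDiags a b) y = y * (cardGF (connDiags a b) y +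
      ∑ c ∈ Ico a b, cardGF (connDiags a c) y * cardGF (connDiags (Order.succ c) b) y) := by
  classical
  have conn_eq : cardGF (closedDiags a b) y + cardGF ((connDiags a b).filter ((a, b) ∉ ·)) y =
      cardGF (connDiags a b) y :=
    sum_filter_add_sum_filter_not _ _ _
  have closable_eq : cardGF ((closableDiags a b).filter (· ∈ connDiags a b)) y +
      cardGF ((closableDiags a b).filter (· ∉ connDiags a b)) y = cardGF (closableDiags a b) y :=
    sum_filter_add_sum_filter_not _ _ _
  rw [closableDiags_filter_mem_connDiags hab,
    cardGF_closableDiags_filter_notMem_connDiags] at closable_eq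
  rw [add_mul, one_mul, ← conn_eq, add_assoc, closable_eq, mul_add, add_comm,
    ← cardGF_closedDiags a b y]

end Recurrences

section Transport

variable {α β R : Type*}

theorem linked_map_iff (f : α ↪ β) {D : Finset (α × α)} {u v : α} :
    Linked (D.map (f.prodMap f)) (f u) (f v) ↔ Linked D u v := by
  refine ⟨fun h => ?_, fun h => h.map fun p hp => .of_mem (Finset.mem_map_of_mem _ hp)⟩
  have : Nonempty α := ⟨u⟩
  have leftInverse := Function.leftInverse_invFun f.injective
  rw [← leftInverse u, ← leftInverse v]
  refine h.map (Finset.forall_mem_map.2 fun p hp => ?_)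
  simpa [leftInverse p.1, leftInverse p.2] using Linked.of_mem hp

variable [LinearOrder α] [LinearOrder β]

theorem isNoncrossing_map_iff (f : α ↪o β) {D : Finset (α × α)} :
    IsNoncrossing (D.map (f.toEmbedding.prodMap f.toEmbedding)) ↔ IsNoncrossing D := by
  refine ⟨fun ⟨hlt, hcross⟩ => ?_, fun ⟨hlt, hcross⟩ => ?_⟩
  · simp only [Finset.forall_mem_map, Function.Embedding.coe_prodMap, Prod.map_fst, Prod.map_snd,
      RelEmbedding.coe_toEmbedding, f.lt_iff_lt] at hlt hcross
    exact ⟨hlt, hcross⟩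
  · constructor <;> simpa only [Finset.forall_mem_map, Function.Embedding.coe_prodMap,
      Prod.map_fst, Prod.map_snd, RelEmbedding.coe_toEmbedding, f.lt_iff_lt]

theorem isConnDiag_map_iff (f : α ↪o β) (hf : (Set.range f).OrdConnected) {a b : α}
    {D : Finset (α × α)} :
    IsConnDiag (f a) (f b) (D.map (f.toEmbedding.prodMap f.toEmbedding)) ↔ IsConnDiag a b D := by
  have mem_Icc_iff : (∀ p ∈ D.map (f.toEmbedding.prodMap f.toEmbedding),
      f a ≤ p.1 ∧ p.2 ≤ f b) ↔ ∀ p ∈ D, a ≤ p.1 ∧ p.2 ≤ b := by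
    rw [Finset.forall_mem_map]
    simp
  have linked_left_iff : (∀ u ∈ Set.Icc (f a) (f b),
      Linked (D.map (f.toEmbedding.prodMap f.toEmbedding)) (f a) u) ↔
        ∀ u ∈ Set.Icc a b, Linked D a u := by
    rw [← f.image_Icc hf, Set.forall_mem_image]
    exact forall₂_congr fun u _ => linked_map_iff f.toEmbedding
  exact ⟨fun h => ⟨(isNoncrossing_map_iff f).1 h.toIsNoncrossing, mem_Icc_iff.1 h.mem_Icc,
      linked_left_iff.1 h.linked_left⟩,
    fun h => ⟨(isNoncrossing_map_iff f).2 h.toIsNoncrossing, mem_Icc_iff.2 h.mem_Icc,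
      linked_left_iff.2 h.linked_left⟩⟩

variable [LocallyFiniteOrder α] [LocallyFiniteOrder β] [CommSemiring R]

theorem connDiags_map (f : α ↪o β) (hf : (Set.range f).OrdConnected) (a b : α) :
    connDiags (f a) (f b) = (connDiags a b).map
      (Finset.mapEmbedding (f.toEmbedding.prodMap f.toEmbedding)).toEmbedding := by
  ext E
  simp only [Finset.mem_map, mem_connDiags, RelEmbedding.coe_toEmbedding,
    Finset.mapEmbedding_apply]
  refine ⟨fun hE => ?_, fun ⟨D, hD, h⟩ => h ▸ (isConnDiag_map_iff f hf).2 hD⟩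
  have hsub : (E : Set (β × β)) ⊆ Set.range (f.toEmbedding.prodMap f.toEmbedding) := by
    intro p hp
    obtain ⟨hap, hpb⟩ := hE.mem_Icc p hp
    have hlt := hE.fst_lt_snd p hp
    rw [Function.Embedding.coe_prodMap, Set.range_prodMap]
    exact ⟨hf.out ⟨a, rfl⟩ ⟨b, rfl⟩ ⟨hap, hlt.le.trans hpb⟩,
      hf.out ⟨a, rfl⟩ ⟨b, rfl⟩ ⟨hap.trans hlt.le, hpb⟩⟩
  obtain ⟨D, rfl⟩ : ∃ D : Finset (α × α), E = D.map (f.toEmbedding.prodMap f.toEmbedding) := by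
    classical
    rw [← Set.image_univ, Finset.subset_set_image_iff] at hsub
    obtain ⟨D, -, rfl⟩ := hsub
    exact ⟨D, (Finset.map_eq_image _ D).symm⟩
  exact ⟨D, (isConnDiag_map_iff f hf).1 hE, rfl⟩

theorem cardGF_connDiags_map (f : α ↪o β) (hf : (Set.range f).OrdConnected) (a b : α) (y : R) :
    cardGF (connDiags (f a) (f b)) y = cardGF (connDiags a b) y := by
  simp only [connDiags_map f hf, cardGF, Finset.sum_map, RelEmbedding.coe_toEmbedding,
    Finset.mapEmbedding_apply, Finset.card_map]

theorem cardGF_connDiags_add_left (a l : ℕ) (y : R) :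
    cardGF (connDiags a (a + l)) y = cardGF (connDiags 0 l) y := by
  have range_eq : Set.range (OrderEmbedding.addLeft a) = Set.Ici a := by
    ext n
    simp [le_iff_exists_add, eq_comm]
  exact cardGF_connDiags_map (OrderEmbedding.addLeft a) (range_eq ▸ Set.ordConnected_Ici) 0 l y

theorem cardGF_connDiags_fin (l : ℕ) (y : R) :
    cardGF (connDiags 0 (Fin.last l)) y = cardGF (connDiags 0 l) y := by
  refine (cardGF_connDiags_map (Fin.valOrderEmb (l + 1)) ?_ 0 (Fin.last l) y).symm
  exact (Fin.range_val (n := l + 1)).symm ▸ Set.ordConnected_Iio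

end Transport

section Series

open Finset

variable {R : Type*}

/-- The generating function of connected crossing-free chord diagrams with weight `y` per chord.
The coefficient of `X ^ n` counts the diagrams on the `n + 1` points `0, …, n`. -/
noncomputable def connSeries [CommSemiring R] (y : R) : PowerSeries R :=
  PowerSeries.mk fun n => cardGF (connDiags 0 n) y

/-- The generating function of the connected diagrams that contain the chord joining the first and
the last point, indexed like `connSeries`. -/
noncomputable def closedSeries [CommSemiring R] (y : R) : PowerSeries R :=
  PowerSeries.mk fun n => cardGF (closedDiags 0 n) y

theorem connSeries_eq_one_add [CommSemiring R] (y : R) :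
    connSeries y = 1 + closedSeries y * connSeries y := by
  ext n
  rw [map_add, PowerSeries.coeff_mul, Nat.sum_antidiagonal_eq_sum_range_succ_mk]
  simp only [connSeries, closedSeries, PowerSeries.coeff_mk, PowerSeries.coeff_one]
  rcases n.eq_zero_or_pos with rfl | hn
  · simp [cardGF, connDiags_self, closedDiags_self]
  · have cardGF_closedDiags_zero : cardGF (closedDiags 0 0) y = 0 := by
      rw [closedDiags_self, cardGF, sum_empty]
    rw [cardGF_connDiags hn, if_neg hn.ne', zero_add, Nat.range_succ_eq_Icc_zero,
      ← add_sum_Ioc_eq_sum_Icc hn.le, cardGF_closedDiags_zero, zero_mul, zero_add]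
    refine sum_congr rfl fun v hv => ?_
    rw [← cardGF_connDiags_add_left v (n - v), Nat.add_sub_cancel' (mem_Ioc.1 hv).2]

theorem one_add_mul_closedSeries [CommSemiring R] (y : R) :
    (1 + PowerSeries.C y) * closedSeries y + PowerSeries.C y =
      PowerSeries.C y * (connSeries y + PowerSeries.X * connSeries y ^ 2) := by
  ext n
  have coeff_left : PowerSeries.coeff n ((1 + PowerSeries.C y) * closedSeries y) =
      (1 + y) * cardGF (closedDiags 0 n) y := by
    rw [← map_one PowerSeries.C, ← map_add, PowerSeries.coeff_C_mul, closedSeries,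
      PowerSeries.coeff_mk]
  rw [map_add, coeff_left, PowerSeries.coeff_C_mul, map_add, PowerSeries.coeff_C]
  cases n with
  | zero => simp [connSeries, cardGF, connDiags_self, closedDiags_self]
  | succ n =>
    rw [one_add_mul_cardGF_closedDiags n.succ_pos, if_neg n.succ_ne_zero, add_zero,
      PowerSeries.coeff_succ_X_mul, sq, PowerSeries.coeff_mul,
      Nat.sum_antidiagonal_eq_sum_range_succ_mk, range_eq_Ico]
    simp only [connSeries, PowerSeries.coeff_mk]
    congr 2
    refine sum_congr rfl fun c hc => ?_
    have hcn : c + 1 + (n - c) = n + 1 := by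
      have := (mem_Ico.1 hc).2
      lia
    rw [Order.succ_eq_add_one, ← cardGF_connDiags_add_left (c + 1) (n - c), hcn]

theorem X_mul_connSeries_algebraic_equation [CommRing R] (y : R) :
    PowerSeries.C y * (PowerSeries.X * connSeries y) ^ 3 +
      PowerSeries.C y * (PowerSeries.X * connSeries y) ^ 2 -
      PowerSeries.X * (1 + 2 * PowerSeries.C y) * (PowerSeries.X * connSeries y) +
      PowerSeries.X ^ 2 * (1 + PowerSeries.C y) = 0 := by
  linear_combination
    (-PowerSeries.X ^ 2 * (1 + PowerSeries.C y)) * connSeries_eq_one_add y -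
      PowerSeries.X ^ 2 * connSeries y * one_add_mul_closedSeries y

end Series

section FinDiagrams

variable {n : ℕ} {D : Finset (Fin n × Fin n)}

theorem crossNum_eq_zero_iff :
    crossNum D = 0 ↔ ∀ p ∈ D, ∀ q ∈ D, ¬ Interleaves p q := by
  simp only [crossNum, Finset.card_eq_zero, Finset.filter_eq_empty_iff, Finset.mem_product,
    Prod.forall, and_imp]
  grind

theorem diagGraph_reachable_iff {u v : Fin n} : (diagGraph D).Reachable u v ↔ Linked D u v := by
  constructor
  · rw [SimpleGraph.reachable_iff_reflTransGen]
    intro h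
    induction h with
    | refl => exact .refl D u
    | tail _ hvw ih =>
      rcases hvw.2 with h | h
      exacts [ih.trans (.of_mem h), ih.trans (Linked.of_mem h).symm]
  · intro h
    induction h with
    | rel u v huv =>
      rcases eq_or_ne u v with rfl | hne
      exacts [.refl u, SimpleGraph.Adj.reachable ⟨hne, .inl huv⟩]
    | refl u => exact .refl u
    | symm u v _ ih => exact ih.symm
    | trans u v w _ _ ihuv ihvw => exact ihuv.trans ihvw

theorem isConnDiag_fin_iff {l : ℕ} {D : Finset (Fin (l + 1) × Fin (l + 1))} :
    IsConnDiag 0 (Fin.last l) D ↔ IsDiagram D ∧ crossNum D = 0 ∧ (diagGraph D).Connected := by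
  rw [crossNum_eq_zero_iff, SimpleGraph.connected_iff_exists_forall_reachable]
  simp only [diagGraph_reachable_iff]
  constructor
  · exact fun h => ⟨h.fst_lt_snd, h.not_cross, 0, fun u => h.linked_left u ⟨u.zero_le, u.le_last⟩⟩
  · rintro ⟨hlt, hcross, r, hr⟩
    exact ⟨⟨hlt, hcross⟩, fun p _ => ⟨p.1.zero_le, p.2.le_last⟩,
      fun u _ => (hr 0).symm.trans (hr u)⟩

theorem coeff_X_mul_connSeries_X (k : ℕ) (x : Fin 1 →₀ ℕ) :
    MvPowerSeries.coeff (R := ℚ) x (PowerSeries.coeff k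
      (PowerSeries.X * connSeries (MvPowerSeries.X 0))) =
    Nat.card {D : Finset (Fin k × Fin k) //
      IsDiagram D ∧ crossNum D = 0 ∧ D.card = x 0 ∧ (diagGraph D).Connected} := by
  classical
  cases k with
  | zero =>
    have : IsEmpty {D : Finset (Fin 0 × Fin 0) //
        IsDiagram D ∧ crossNum D = 0 ∧ D.card = x 0 ∧ (diagGraph D).Connected} :=
      ⟨fun D => D.2.2.2.2.nonempty.elim finZeroElim⟩
    rw [PowerSeries.coeff_zero_X_mul, map_zero, Nat.card_of_isEmpty, Nat.cast_zero]
  | succ l =>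
    have hx (m : ℕ) : x = Finsupp.single 0 m ↔ m = x 0 := by
      rw [Finsupp.unique_ext_iff, Fin.default_eq_zero, Finsupp.single_eq_same, eq_comm]
    rw [PowerSeries.coeff_succ_X_mul, connSeries, PowerSeries.coeff_mk, ← cardGF_connDiags_fin,
      cardGF, map_sum]
    simp only [MvPowerSeries.coeff_X_pow, hx]
    rw [Finset.sum_boole, Nat.card_eq_fintype_card, Fintype.card_subtype]
    congr 2
    ext D
    simp only [Finset.mem_filter, mem_connDiags, isConnDiag_fin_iff, Finset.mem_univ]
    tauto

theorem finSuccEquiv_connDiagGF0 :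
    MvPowerSeries.finSuccEquiv ℚ 1 connDiagGF0 =
      PowerSeries.X * connSeries (MvPowerSeries.X 0) := by
  ext k x
  have cons_one : Finsupp.cons k x 1 = x 0 := Finsupp.cons_succ 0 k x
  rw [MvPowerSeries.coeff_coeff_finSuccEquiv, coeff_X_mul_connSeries_X, ← cons_one]
  rfl

end FinDiagrams

/-- The generating function `C(x,y)` of connected crossing-free chord diagrams
satisfies `y·C³ + y·C² − x(1+2y)·C + x²(1+y) = 0`. -/
theorem connDiagGF0_algebraic_equation :
    (MvPowerSeries.X 1 : MvPowerSeries (Fin 2) ℚ) * connDiagGF0 ^ 3 +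
      MvPowerSeries.X 1 * connDiagGF0 ^ 2 -
      MvPowerSeries.X 0 * (1 + 2 * MvPowerSeries.X 1) * connDiagGF0 +
      MvPowerSeries.X 0 ^ 2 * (1 + MvPowerSeries.X 1) = 0 := by
  have hy : MvPowerSeries.finSuccEquiv ℚ 1 (MvPowerSeries.X 1) =
      PowerSeries.C (MvPowerSeries.X 0) := MvPowerSeries.finSuccEquiv_X_succ 0
  apply (MvPowerSeries.finSuccEquiv ℚ 1).injective
  simp only [map_add, map_sub, map_mul, map_pow, map_one, map_ofNat, map_zero, hy,
    MvPowerSeries.finSuccEquiv_X_zero, finSuccEquiv_connDiagGF0]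
  exact X_mul_connSeries_algebraic_equation (MvPowerSeries.X 0)
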